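/- arXiv:2005.13057 — 2 statements merged into one kernel-verified Lean document; each statement's English description precedes it below -/
import Mathlib

section
/- If a well-formed configuration (σ₁ : θ₁ : s) takes a garbage-collection step, (σ₁ : θ₁ : s) ↦GC (σ₂ : θ₂ : s), then every location l ∈ dom(σ₁) ∪ dom(θ₁) with reach(l, s, σ₁, θ₁) also satisfies reach(l, s, σ₂, θ₂). -/
/-!
An abstract model of the Lua semantics with garbage collection of
Soldevila, Ziliani and Fridlender, "Understanding Lua's Garbage Collection".

`GCLang` packages the abstract syntactic data: types of value-store references,
table/closure identifiers, storable values, stored objects (tables and closures,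
including their contents, metatables and closure environments) and instruction
terms, together with the literal-occurrence predicates of locations in terms,
values and objects.
-/
structure GCLang where
  /-- references into the values store σ -/
  Ref : Type
  /-- identifiers (of tables and closures) into the objects store θ -/
  Id : Type
  /-- storable values -/
  Val : Type
  /-- stored objects: tables (contents + metatable) and closures -/
  Obj : Type
  /-- instruction terms (statements/expressions) -/
  Term : Type
  /-- `occT l t`: the location `l` occurs literally in the term `t` -/
  occT : Ref ⊕ Id → Term → Prop
  /-- `occV l v`: the location `l` occurs in the value `v` -/
  occV : Ref ⊕ Id → Val → Prop
  /-- `occO l o`: the location `l` occurs in the object `o`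
      (in a table's contents or metatable, or in a closure's environment) -/
  occO : Ref ⊕ Id → Obj → Prop

namespace GCLang

/-- Locations: value-store references or table/closure identifiers. -/
abbrev Loc (L : GCLang) : Type := L.Ref ⊕ L.Id

/-- A configuration σ : θ : s -/
structure Config (L : GCLang) where
  /-- values store -/
  σ : L.Ref → Option L.Val
  /-- objects store -/
  θ : L.Id → Option L.Obj
  /-- instruction term -/
  s : L.Term

/-- `Reach L t σ θ l`: the location `l` is reachable in the term `t` with stores
`σ`, `θ`: it occurs literally in `t`, or it is reachable from the value stored at
a reachable reference, or from the object (table contents, metatable or closure)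
stored at a reachable identifier. -/
inductive Reach (L : GCLang) (t : L.Term) (σ : L.Ref → Option L.Val)
    (θ : L.Id → Option L.Obj) : L.Loc → Prop
  | root {l : L.Loc} : L.occT l t → Reach L t σ θ l
  | ref {r : L.Ref} {v : L.Val} {l : L.Loc} :
      Reach L t σ θ (Sum.inl r) → σ r = some v → L.occV l v → Reach L t σ θ l
  | obj {i : L.Id} {o : L.Obj} {l : L.Loc} :
      Reach L t σ θ (Sum.inr i) → θ i = some o → L.occO l o → Reach L t σ θ l

/-- `l ∈ dom σ ∪ dom θ` of a configuration. -/
def memDom (L : GCLang) (c : L.Config) : L.Loc → Prop := fun l =>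
  match l with
  | Sum.inl r => c.σ r ≠ none
  | Sum.inr i => c.θ i ≠ none

/-- No dangling references: every location occurring in the term or in a stored
value/object belongs to the domain of the corresponding store. -/
def Closed (L : GCLang) (c : L.Config) : Prop :=
  (∀ l, L.occT l c.s → L.memDom c l) ∧
  (∀ r v, c.σ r = some v → ∀ l, L.occV l v → L.memDom c l) ∧
  (∀ i o, c.θ i = some o → ∀ l, L.occO l o → L.memDom c l)

/-- Well-formedness of a configuration: the instruction term is well formed
(an abstract predicate `WFTerm`) and there are no dangling references. -/
def WF (L : GCLang) (WFTerm : L.Term → Prop) (c : L.Config) : Prop :=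
  WFTerm c.s ∧ L.Closed c

/-- One half of ~rch: every reachable location in the domain of the stores of
`c₁` is reachable in `c₂` and is bound to the same value/object there. -/
def RchLe (L : GCLang) (c₁ c₂ : L.Config) : Prop :=
  (∀ r, c₁.σ r ≠ none → L.Reach c₁.s c₁.σ c₁.θ (Sum.inl r) →
    L.Reach c₂.s c₂.σ c₂.θ (Sum.inl r) ∧ c₁.σ r = c₂.σ r) ∧
  (∀ i, c₁.θ i ≠ none → L.Reach c₁.s c₁.σ c₁.θ (Sum.inr i) →
    L.Reach c₂.s c₂.σ c₂.θ (Sum.inr i) ∧ c₁.θ i = c₂.θ i)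

/-- `c₁ ~rch c₂`: the two configurations have the same instruction term and
coincide in the reachable portions of their stores. -/
def RchEq (L : GCLang) (c₁ c₂ : L.Config) : Prop :=
  c₁.s = c₂.s ∧ L.RchLe c₁ c₂ ∧ L.RchLe c₂ c₁

/-- The non-deterministic garbage-collection step ↦GC: the term is unchanged,
the resulting stores are restrictions of the original ones (σ = σ₁ ⊎ σ₂,
θ = θ₁ ⊎ θ₂), every removed binding is unreachable, and at least one of the
stores actually changes. -/
def GCStep (L : GCLang) (c c' : L.Config) : Prop :=
  c'.s = c.s ∧
  (∀ r, c'.σ r = c.σ r ∨ c'.σ r = none) ∧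
  (∀ i, c'.θ i = c.θ i ∨ c'.θ i = none) ∧
  (∀ r, c.σ r ≠ none → c'.σ r = none → ¬ L.Reach c.s c.σ c.θ (Sum.inl r)) ∧
  (∀ i, c.θ i ≠ none → c'.θ i = none → ¬ L.Reach c.s c.σ c.θ (Sum.inr i)) ∧
  (c'.σ ≠ c.σ ∨ c'.θ ≠ c.θ)

open Classical in
/-- The result of a final configuration: the final term (the evaluation context
around a top-level return stripped off by `resTerm`) together with the stores
restricted to the locations reachable from that final term. -/
noncomputable def result (L : GCLang) (resTerm : L.Term → L.Term)
    (c : L.Config) : L.Config where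
  σ := fun r => if L.Reach (resTerm c.s) c.σ c.θ (Sum.inl r) then c.σ r else none
  θ := fun i => if L.Reach (resTerm c.s) c.σ c.θ (Sum.inr i) then c.θ i else none
  s := resTerm c.s

/-- `c` converges under `step` to the final configuration `c'`. -/
def Converges (L : GCLang) (step : L.Config → L.Config → Prop)
    (FinalTerm : L.Term → Prop) (c c' : L.Config) : Prop :=
  Relation.ReflTransGen step c c' ∧ FinalTerm c'.s

/-- `c` diverges under `step`: there is an infinite trace from `c`. -/
def Diverges (L : GCLang) (step : L.Config → L.Config → Prop)
    (c : L.Config) : Prop :=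
  ∃ f : ℕ → L.Config, f 0 = c ∧ ∀ n, step (f n) (f (n + 1))

/-- Observations over a program: ⊥ (here `none`) if it diverges, and the
results of the final configurations of its convergent computations. -/
noncomputable def obs (L : GCLang) (step : L.Config → L.Config → Prop)
    (FinalTerm : L.Term → Prop) (resTerm : L.Term → L.Term)
    (c : L.Config) : Set (Option L.Config) :=
  {x | x = none ∧ L.Diverges step c} ∪
  {x | ∃ c', L.Converges step FinalTerm c c' ∧ x = some (L.result resTerm c')}

end GCLang

/-- a GC step preserves reachability of all reachable locations
in the domains of the stores (the instruction term is unchanged by GC). -/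
theorem gcStep_preserves_reachability
    (L : GCLang) (WFTerm : L.Term → Prop)
    (c₁ c₂ : L.Config) (hwf : L.WF WFTerm c₁) (hgc : L.GCStep c₁ c₂) :
    ∀ l : L.Loc, L.memDom c₁ l →
      L.Reach c₁.s c₁.σ c₁.θ l → L.Reach c₁.s c₂.σ c₂.θ l := by
  intro l hm h
  clear hm
  obtain ⟨-, hσ, hθ, nσ, nθ, -⟩ := hgc
  induction h with
  | root h => exact .root h
  | @ref r v l hr hv ho ih =>
    rcases hσ r with e | e
    · exact .ref ih (e.trans hv) ho
    · exact absurd hr (nσ r (by simp [hv]) e)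
  | @obj i o l hr hv ho ih =>
    rcases hθ i with e | e
    · exact .obj ih (e.trans hv) ho
    · exact absurd hr (nθ i (by simp [hv]) e)
end

section
/- If (σ₁ : θ₁ : s) and (σ₂ : θ₂ : s) are well-formed configurations with (σ₁ : θ₁ : s) ↦GC (σ₂ : θ₂ : s), then (σ₁ : θ₁ : s) ~rch (σ₂ : θ₂ : s), i.e., a GC step produces a configuration that coincides with the original in the reachable portion of the stores. -/
/-- a GC step produces a configuration that coincides with the
original in the reachable portion of the stores. -/
theorem gcStep_rchEq
    (L : GCLang) (WFTerm : L.Term → Prop)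
    (c₁ c₂ : L.Config)
    (hwf₁ : L.WF WFTerm c₁) (hwf₂ : L.WF WFTerm c₂)
    (hgc : L.GCStep c₁ c₂) :
    L.RchEq c₁ c₂ := by
  obtain ⟨hs, hσ, hθ, hrσ, hrθ, -⟩ := hgc
  have eσ : ∀ r, L.Reach c₁.s c₁.σ c₁.θ (Sum.inl r) → c₁.σ r = c₂.σ r := by
    intro r hr
    rcases hσ r with h | h
    · exact h.symm
    · by_cases h1 : c₁.σ r = none
      · rw [h1, h]
      · exact absurd hr (hrσ r h1 h)
  have eθ : ∀ i, L.Reach c₁.s c₁.σ c₁.θ (Sum.inr i) → c₁.θ i = c₂.θ i := by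
    intro i hr
    rcases hθ i with h | h
    · exact h.symm
    · by_cases h1 : c₁.θ i = none
      · rw [h1, h]
      · exact absurd hr (hrθ i h1 h)
  have fwd : ∀ l, L.Reach c₁.s c₁.σ c₁.θ l → L.Reach c₂.s c₂.σ c₂.θ l := by
    intro l hl
    induction hl with
    | root h => exact .root (hs.symm ▸ h)
    | ref hr hv ho ih => exact .ref ih ((eσ _ hr).symm.trans hv) ho
    | obj hr hv ho ih => exact .obj ih ((eθ _ hr).symm.trans hv) ho
  have bwd : ∀ l, L.Reach c₂.s c₂.σ c₂.θ l → L.Reach c₁.s c₁.σ c₁.θ l := by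
    intro l hl
    induction hl with
    | root h => exact .root (hs ▸ h)
    | ref hr hv ho ih => exact .ref ih ((eσ _ ih).trans hv) ho
    | obj hr hv ho ih => exact .obj ih ((eθ _ ih).trans hv) ho
  exact ⟨hs.symm,
    ⟨fun r _ h => ⟨fwd _ h, eσ r h⟩, fun i _ h => ⟨fwd _ h, eθ i h⟩⟩,
    ⟨fun r _ h => ⟨bwd _ h, (eσ r (bwd _ h)).symm⟩,
     fun i _ h => ⟨bwd _ h, (eθ i (bwd _ h)).symm⟩⟩⟩
end
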